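/- For all r, s ≥ 0, the real Clifford algebras satisfy the periodicity Cl_{r+8,s} ≅ Cl_{r,s+8} ≅ M₁₆(Cl_{r,s}). -/

import Mathlib

/-- The quadratic form on `ℝ^(r+s)` whose Clifford algebra (in Mathlib's convention
`ι v ^ 2 = Q v`) is `Cl_{r,s}`, i.e. `e_i² = -1` for `i < r` and `e_i² = +1` for `i ≥ r`. -/
noncomputable def QSig (r s : ℕ) : QuadraticForm ℝ (Fin (r + s) → ℝ) :=
  QuadraticMap.weightedSumSquares ℝ
    (fun i : Fin (r + s) => if i.val < r then (-1 : ℝ) else 1)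

open CliffordAlgebra

/-- An algebra homomorphism out of a matrix algebra, built from a homomorphism on the coefficients
and a system of matrix units commuting with its image. -/
noncomputable def Matrix.algHomOfUnits {R B C n : Type*} [CommRing R] [Ring B] [Ring C]
    [Algebra R B] [Algebra R C] [Fintype n] [DecidableEq n] (σ : B →ₐ[R] C) (E : n → n → C)
    (mul : ∀ i j k l, E i j * E k l = if j = k then E i l else 0) (one : ∑ i, E i i = 1)
    (comm : ∀ b i j, Commute (σ b) (E i j)) : Matrix n n B →ₐ[R] C :=
  AlgHom.ofLinearMap
    { toFun M := ∑ i, ∑ j, σ (M i j) * E i j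
      map_add' M N := by simp [add_mul, Finset.sum_add_distrib]
      map_smul' c M := by simp [Finset.smul_sum] }
    (by
      have h (i j : n) : σ ((1 : Matrix n n B) i j) * E i j = if i = j then E i j else 0 := by
        rw [Matrix.one_apply]
        split_ifs <;> simp
      simp [h, one])
    (by
      intro M N
      have h (i j k l : n) : σ (M i j) * E i j * (σ (N k l) * E k l) =
          if j = k then σ (M i j) * σ (N k l) * E i l else 0 := by
        rw [mul_assoc, ← mul_assoc (E i j), ← (comm (N k l) i j).eq, mul_assoc (σ (N k l)), mul]
        split_ifs <;> simp [mul_assoc]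
      simp only [LinearMap.coe_mk, AddHom.coe_mk, Matrix.mul_apply, map_sum, map_mul,
        Finset.sum_mul]
      refine Finset.sum_congr rfl fun i _ => ?_
      rw [Finset.sum_comm]
      refine Finset.sum_congr rfl fun j _ => ?_
      simp only [Finset.mul_sum, h]
      rw [Finset.sum_comm]
      simp)

/-- Split the coordinates of `ℝ^(r+s)` into the negative and the positive ones. -/
theorem QSig_apply (r s : ℕ) (x : Fin (r + s) → ℝ) :
    QSig r s x = -∑ i, x (Fin.castAdd s i) * x (Fin.castAdd s i)
      + ∑ i, x (Fin.natAdd r i) * x (Fin.natAdd r i) := by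
  simp [QSig, QuadraticMap.weightedSumSquares_apply, Fin.sum_univ_add]

/-- The signature of an orthogonal sum is the sum of the signatures. -/
noncomputable def QSig.prodIsometryEquiv (r s r' s' : ℕ) :
    ((QSig r s).prod (QSig r' s')).IsometryEquiv (QSig (r + r') (s + s')) where
  toLinearEquiv :=
    (LinearEquiv.sumArrowLequivProdArrow _ _ ℝ ℝ).symm ≪≫ₗ
      LinearEquiv.funCongrLeft ℝ ℝ
        ((finSumFinEquiv.symm.trans (Equiv.sumCongr finSumFinEquiv.symm finSumFinEquiv.symm)).trans
          ((Equiv.sumSumSumComm _ _ _ _).trans (Equiv.sumCongr finSumFinEquiv finSumFinEquiv)))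
  map_app' x := by
    simp [QSig_apply, Fin.sum_univ_add, LinearMap.funLeft, LinearEquiv.sumArrowLequivProdArrow,
      Equiv.sumArrowEquivProdArrow]
    ring

namespace CliffordAlgebra

variable {M N : Type*} [AddCommGroup M] [Module ℝ M] [AddCommGroup N] [Module ℝ N]

theorem ι_inl_mul_ι_inr (Q : QuadraticForm ℝ M) (P : QuadraticForm ℝ N) (v : M) (x : N) :
    ι (Q.prod P) (v, 0) * ι (Q.prod P) (0, x) = -(ι (Q.prod P) (0, x) * ι (Q.prod P) (v, 0)) :=
  ι_mul_ι_comm_of_isOrtho (by simp [QuadraticMap.isOrtho_def])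

/-- An involutive element `ω` that commutes with the first summand and anticommutes with the second
turns the quadratic form of the second summand into its negative. -/
noncomputable def negInr {Q : QuadraticForm ℝ M} {P P' : QuadraticForm ℝ N} (h : P' = -P)
    (ω : CliffordAlgebra (Q.prod P)) (sq : ω * ω = 1)
    (comm : ∀ v, ω * ι _ (v, 0) = ι _ (v, 0) * ω)
    (anti : ∀ x, ω * ι _ (0, x) = -(ι _ (0, x) * ω)) :
    CliffordAlgebra (Q.prod P') →ₐ[ℝ] CliffordAlgebra (Q.prod P) :=
  lift _ ⟨ι (Q.prod P) ∘ₗ LinearMap.inl ℝ M N ∘ₗ LinearMap.fst ℝ M N +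
    LinearMap.mulRight ℝ ω ∘ₗ ι (Q.prod P) ∘ₗ LinearMap.inr ℝ M N ∘ₗ LinearMap.snd ℝ M N, by
      rintro ⟨v, x⟩
      have hv := ι_sq_scalar (Q.prod P) (v, 0)
      have hx := ι_sq_scalar (Q.prod P) (0, x)
      have hvx := ι_inl_mul_ι_inr Q P v x
      simp only [QuadraticMap.prod_apply, QuadraticMap.map_zero, add_zero, zero_add] at hv hx
      subst h
      simp only [LinearMap.add_apply, LinearMap.comp_apply, LinearMap.inl_apply,
        LinearMap.fst_apply, LinearMap.inr_apply, LinearMap.snd_apply, LinearMap.mulRight_apply,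
        QuadraticMap.prod_apply, neg_apply, map_add, map_neg, ← hv, ← hx]
      have h1 : ι (Q.prod P) (0, x) * ω * ι (Q.prod P) (v, 0)
          = -(ι (Q.prod P) (v, 0) * (ι (Q.prod P) (0, x) * ω)) := by
        rw [mul_assoc, comm, ← mul_assoc, ← mul_assoc, hvx, neg_mul, neg_neg]
      have h2 : ι (Q.prod P) (0, x) * ω * (ι (Q.prod P) (0, x) * ω)
          = -(ι (Q.prod P) (0, x) * ι (Q.prod P) (0, x)) := by
        rw [mul_assoc, ← mul_assoc ω, anti, neg_mul, mul_assoc _ ω, sq, mul_one, mul_neg]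
      rw [add_mul, mul_add, mul_add, h1, h2]
      abel⟩

section

variable {Q : QuadraticForm ℝ M} {P P' : QuadraticForm ℝ N} (h : P' = -P)
  (ω : CliffordAlgebra (Q.prod P)) (sq : ω * ω = 1)
  (comm : ∀ v, ω * ι _ (v, 0) = ι _ (v, 0) * ω)
  (anti : ∀ x, ω * ι _ (0, x) = -(ι _ (0, x) * ω))

@[simp]
theorem negInr_ι_inl (v : M) : negInr h ω sq comm anti (ι _ (v, 0)) = ι _ (v, 0) := by
  simp [negInr, Prod.mk_zero_zero]

@[simp]
theorem negInr_ι_inr (x : N) : negInr h ω sq comm anti (ι _ (0, x)) = ι _ (0, x) * ω := by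
  simp [negInr, Prod.mk_zero_zero]

end

theorem _root_.mul_mul_mul_self_of_anticomm {A : Type*} [Ring A] (e : Fin 4 → A)
    (h : ∀ i j, i ≠ j → e i * e j = -(e j * e i)) :
    (e 0 * e 1 * (e 2 * e 3)) * (e 0 * e 1 * (e 2 * e 3)) =
      e 0 * e 0 * (e 1 * e 1) * (e 2 * e 2 * (e 3 * e 3)) := by
  have h₂ (i j : Fin 4) (hij : j < i) : e i * e j = -(e j * e i) := h i j hij.ne'
  have h₃ (i j : Fin 4) (hij : j < i) (z : A) : e i * (e j * z) = -(e j * (e i * z)) := by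
    rw [← mul_assoc, h₂ i j hij, neg_mul, mul_assoc]
  simp [mul_assoc, h₃]

theorem _root_.mul_mul_mul_anticomm {A : Type*} [Ring A] (e : Fin 4 → A)
    (h : ∀ i j, i ≠ j → e i * e j = -(e j * e i)) (i : Fin 4) :
    (e 0 * e 1 * (e 2 * e 3)) * e i = -(e i * (e 0 * e 1 * (e 2 * e 3))) := by
  have h₂ (i j : Fin 4) (hij : j < i) : e i * e j = -(e j * e i) := h i j hij.ne'
  have h₃ (i j : Fin 4) (hij : j < i) (z : A) : e i * (e j * z) = -(e j * (e i * z)) := by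
    rw [← mul_assoc, h₂ i j hij, neg_mul, mul_assoc]
  fin_cases i <;> simp [mul_assoc, h₂, h₃]

theorem _root_.mul_mul_mul_of_anticomm_involution {A : Type*} [Ring A] (e : Fin 4 → A) (ω : A)
    (sq : ω * ω = 1) (h : ∀ i, ω * e i = -(e i * ω)) :
    (e 0 * ω) * (e 1 * ω) * ((e 2 * ω) * (e 3 * ω)) = e 0 * e 1 * (e 2 * e 3) := by
  have key (a : A) (i : Fin 4) : a * ω * (e i * ω) = -(a * e i) := by
    rw [mul_assoc, ← mul_assoc ω, h, neg_mul, mul_assoc _ ω, sq, mul_one, mul_neg]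
  rw [key, key, neg_mul_neg]

section Volume

variable (Q : QuadraticForm ℝ M) (c : ℝ)

/-- The generators coming from a four-dimensional summand. -/
noncomputable def ιFour (i : Fin 4) :
    CliffordAlgebra (Q.prod (QuadraticMap.weightedSumSquares ℝ fun _ : Fin 4 => c)) :=
  ι _ (0, Pi.single i 1)

/-- The volume element of a four-dimensional summand. -/
noncomputable def volFour :
    CliffordAlgebra (Q.prod (QuadraticMap.weightedSumSquares ℝ fun _ : Fin 4 => c)) :=
  ιFour Q c 0 * ιFour Q c 1 * (ιFour Q c 2 * ιFour Q c 3)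

theorem ι_inr_eq_sum_ιFour (x : Fin 4 → ℝ) : ι _ (0, x) = ∑ i, x i • ιFour Q c i := by
  have hx : x = ∑ i, x i • (Pi.single i 1 : Fin 4 → ℝ) := by
    ext j
    simp [Finset.sum_apply, Pi.single_apply]
  have := congrArg (ι (Q.prod (QuadraticMap.weightedSumSquares ℝ fun _ : Fin 4 => c)) ∘ₗ
    LinearMap.inr ℝ M _) hx
  simpa [ιFour] using this

theorem ιFour_anticomm (i j : Fin 4) (hij : i ≠ j) :
    ιFour Q c i * ιFour Q c j = -(ιFour Q c j * ιFour Q c i) := by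
  refine ι_mul_ι_comm_of_isOrtho ?_
  simp only [QuadraticMap.isOrtho_def, QuadraticMap.prod_apply,
    QuadraticMap.weightedSumSquares_apply, Fin.sum_univ_four]
  fin_cases i <;> fin_cases j <;> simp at hij ⊢

theorem ιFour_mul_self (i : Fin 4) : ιFour Q c i * ιFour Q c i = algebraMap ℝ _ c := by
  refine (ι_sq_scalar _ _).trans ?_
  simp [QuadraticMap.weightedSumSquares_apply, Pi.single_apply]

theorem volFour_mul_self (hc : c * c = 1) : volFour Q c * volFour Q c = 1 := by
  rw [volFour, mul_mul_mul_self_of_anticomm _ (ιFour_anticomm Q c)]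
  simp [ιFour_mul_self, ← map_mul, hc]

theorem volFour_mul_ιFour (i : Fin 4) :
    volFour Q c * ιFour Q c i = -(ιFour Q c i * volFour Q c) :=
  mul_mul_mul_anticomm _ (ιFour_anticomm Q c) i

theorem volFour_mul_ι_inr (x : Fin 4 → ℝ) :
    volFour Q c * ι _ (0, x) = -(ι _ (0, x) * volFour Q c) := by
  simp [ι_inr_eq_sum_ιFour, Finset.mul_sum, Finset.sum_mul, volFour_mul_ιFour]

theorem volFour_mul_ι_inl (v : M) :
    volFour Q c * ι _ (v, 0) = ι _ (v, 0) * volFour Q c := by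
  have h (i : Fin 4) : ιFour Q c i * ι _ (v, 0) = -(ι _ (v, 0) * ιFour Q c i) := by
    rw [ιFour, ι_inl_mul_ι_inr, neg_neg]
  have h₃ (i : Fin 4) (z) : ιFour Q c i * (ι _ (v, 0) * z) = -(ι _ (v, 0) * (ιFour Q c i * z)) := by
    rw [← mul_assoc, h, neg_mul, mul_assoc]
  simp [volFour, mul_assoc, h, h₃]

variable {c} {d : ℝ}

/-- Replace the sign of a four-dimensional definite summand. -/
noncomputable def negFour (h : d = -c) (hc : c * c = 1) :
    CliffordAlgebra (Q.prod (QuadraticMap.weightedSumSquares ℝ fun _ : Fin 4 => d)) →ₐ[ℝ]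
      CliffordAlgebra (Q.prod (QuadraticMap.weightedSumSquares ℝ fun _ : Fin 4 => c)) :=
  negInr (by ext; simp [h, QuadraticMap.weightedSumSquares_apply]) (volFour Q c)
    (volFour_mul_self Q c hc) (volFour_mul_ι_inl Q c) (volFour_mul_ι_inr Q c)

theorem negFour_volFour (h : d = -c) (hc : c * c = 1) :
    negFour Q h hc (volFour Q d) = volFour Q c := by
  have key (i : Fin 4) : negFour Q h hc (ιFour Q d i) = ιFour Q c i * volFour Q c :=
    negInr_ι_inr ..
  rw [volFour, map_mul, map_mul, map_mul, key, key, key, key,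
    mul_mul_mul_of_anticomm_involution _ _ (volFour_mul_self Q c hc) (volFour_mul_ιFour Q c),
    volFour]

theorem negFour_comp_negFour (h : d = -c) (hc : c * c = 1) (h' : c = -d) (hd : d * d = 1) :
    (negFour Q h hc).comp (negFour Q h' hd) = AlgHom.id ℝ _ := by
  ext v
  · simp [negFour]
  · have := negFour_volFour Q h hc
    simp only [negFour] at this
    simp [negFour, this, mul_assoc, volFour_mul_self Q c hc]

/-- A positive definite four-dimensional summand may be exchanged for a negative definite one. -/
noncomputable def negFourEquiv (h : d = -c) (hc : c * c = 1) :
    CliffordAlgebra (Q.prod (QuadraticMap.weightedSumSquares ℝ fun _ : Fin 4 => d)) ≃ₐ[ℝ]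
      CliffordAlgebra (Q.prod (QuadraticMap.weightedSumSquares ℝ fun _ : Fin 4 => c)) :=
  AlgEquiv.ofAlgHom (negFour Q h hc) (negFour Q (by simp [h]) (by simp [h, hc]))
    (negFour_comp_negFour ..) (negFour_comp_negFour ..)

end Volume

/-- `Cl_{r+4,s} ≅ Cl_{r,s+4}`. -/
theorem nonempty_equiv_shift_four (r s : ℕ) :
    Nonempty (CliffordAlgebra (QSig (r + 4) s) ≃ₐ[ℝ] CliffordAlgebra (QSig r (s + 4))) := by
  have h₁ : QSig 4 0 = QuadraticMap.weightedSumSquares ℝ fun _ : Fin 4 => (-1 : ℝ) := by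
    ext x; exact (QSig_apply 4 0 x).trans (by simp [QuadraticMap.weightedSumSquares_apply])
  have h₂ : QSig 0 4 = QuadraticMap.weightedSumSquares ℝ fun _ : Fin 4 => (1 : ℝ) := by
    ext; simp [QSig, QuadraticMap.weightedSumSquares_apply]
  have e₁ := equivOfIsometry (QSig.prodIsometryEquiv r s 4 0)
  have e₂ := equivOfIsometry (QSig.prodIsometryEquiv r s 0 4)
  rw [h₁] at e₁
  rw [h₂] at e₂
  exact ⟨e₁.symm.trans ((negFourEquiv _ (by simp) (by simp)).trans e₂)⟩

section Hyperbolic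

/-- The matrix units of the algebra generated by anticommuting `a`, `b` with `a² = -1`, `b² = 1`. -/
noncomputable def hyperbolicUnits {A : Type*} [Ring A] [Algebra ℝ A] (a b : A) :
    Matrix (Fin 2) (Fin 2) A :=
  (2⁻¹ : ℝ) • !![1 + a * b, b + a; b - a, 1 - a * b]

theorem hyperbolicUnits_mul {A : Type*} [Ring A] [Algebra ℝ A] {a b : A} (ha : a * a = -1)
    (hb : b * b = 1) (hab : b * a = -(a * b)) (i j k l : Fin 2) :
    hyperbolicUnits a b i j * hyperbolicUnits a b k l =
      if j = k then hyperbolicUnits a b i l else 0 := by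
  have ha' (z : A) : a * (a * z) = -z := by rw [← mul_assoc, ha, neg_one_mul]
  have hab' (z : A) : b * (a * z) = -(a * (b * z)) := by
    rw [← mul_assoc, hab, neg_mul, mul_assoc]
  fin_cases i <;> fin_cases j <;> fin_cases k <;> fin_cases l <;>
    simp [hyperbolicUnits, mul_add, add_mul, mul_sub, sub_mul, mul_assoc, ha, hb, hab, ha',
      hab', smul_smul] <;> module

theorem sum_hyperbolicUnits {A : Type*} [Ring A] [Algebra ℝ A] (a b : A) :
    ∑ i, hyperbolicUnits a b i i = 1 := by
  simp [hyperbolicUnits]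
  module

theorem commute_hyperbolicUnits {A : Type*} [Ring A] [Algebra ℝ A] {a b z : A} (ha : Commute z a)
    (hb : Commute z b) (i j : Fin 2) : Commute z (hyperbolicUnits a b i j) := by
  have hab := ha.mul_right hb
  have h1 := Commute.one_right z
  fin_cases i <;> fin_cases j <;> simp only [hyperbolicUnits] <;> refine Commute.smul_right ?_ _
  exacts [h1.add_right hab, hb.add_right ha, hb.sub_right ha, h1.sub_right hab]

theorem QSig_one_one (x : Fin (1 + 1) → ℝ) : QSig 1 1 x = -(x 0 * x 0) + x 1 * x 1 :=
  (QSig_apply 1 1 x).trans (by simp)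

variable (Q : QuadraticForm ℝ M)

/-- The Clifford algebra of `Q` plus a hyperbolic plane acts by `2 × 2` matrices. -/
noncomputable def toMatrixTwo :
    CliffordAlgebra (Q.prod (QSig 1 1)) →ₐ[ℝ] Matrix (Fin 2) (Fin 2) (CliffordAlgebra Q) :=
  lift _ ⟨{ toFun := fun p => !![ι Q p.1, algebraMap ℝ _ (p.2 1 + p.2 0);
              algebraMap ℝ _ (p.2 1 - p.2 0), -ι Q p.1]
            map_add' := fun p q => by
              ext i j
              fin_cases i <;> fin_cases j <;> simp <;> abel
            map_smul' := fun c p => by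
              ext i j
              fin_cases i <;> fin_cases j <;> simp [Algebra.smul_def, mul_add, mul_sub] }, by
    rintro ⟨v, x⟩
    have h₁ : (x 1 + x 0) * (x 1 - x 0) = QSig 1 1 x := by rw [QSig_one_one]; ring
    have h₂ : (x 1 - x 0) * (x 1 + x 0) = QSig 1 1 x := by rw [QSig_one_one]; ring
    have hc (t : ℝ) : algebraMap ℝ _ t * ι Q v = ι Q v * algebraMap ℝ _ t := Algebra.commutes _ _
    simp only [LinearMap.coe_mk, AddHom.coe_mk, Matrix.mul_fin_two, ι_sq_scalar,
      ← map_mul, ← map_add, h₁, h₂, hc, mul_neg, neg_mul, add_neg_cancel]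
    ext i j
    fin_cases i <;> fin_cases j <;> simp [Matrix.algebraMap_matrix_apply, add_comm]⟩

theorem toMatrixTwo_ι (v : M) (x : Fin (1 + 1) → ℝ) :
    toMatrixTwo Q (ι _ (v, x)) = !![ι Q v, algebraMap ℝ _ (x 1 + x 0);
      algebraMap ℝ _ (x 1 - x 0), -ι Q v] :=
  lift_ι_apply ..

/-- The negative generator of the hyperbolic plane. -/
noncomputable def hypNeg : CliffordAlgebra (Q.prod (QSig 1 1)) := ι _ (0, Pi.single 0 1)

/-- The positive generator of the hyperbolic plane. -/
noncomputable def hypPos : CliffordAlgebra (Q.prod (QSig 1 1)) := ι _ (0, Pi.single 1 1)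

theorem hypNeg_mul_self : hypNeg Q * hypNeg Q = -1 :=
  (ι_sq_scalar _ _).trans (by simp [QSig_one_one])

theorem hypPos_mul_self : hypPos Q * hypPos Q = 1 :=
  (ι_sq_scalar _ _).trans (by simp [QSig_one_one])

theorem hypPos_mul_hypNeg : hypPos Q * hypNeg Q = -(hypNeg Q * hypPos Q) :=
  ι_mul_ι_comm_of_isOrtho (by simp [QuadraticMap.isOrtho_def, QSig_one_one])

theorem ι_inr_eq_hyp (x : Fin (1 + 1) → ℝ) :
    ι (Q.prod (QSig 1 1)) (0, x) = x 0 • hypNeg Q + x 1 • hypPos Q := by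
  rw [hypNeg, hypPos, ← map_smul, ← map_smul, ← map_add]
  congr 1
  ext i
  · simp
  · fin_cases i <;> simp

theorem hypNeg_mul_ι_inl (v : M) :
    hypNeg Q * ι _ (v, 0) = -(ι _ (v, 0) * hypNeg Q) := by
  rw [hypNeg, ι_inl_mul_ι_inr, neg_neg]

theorem hypPos_mul_ι_inl (v : M) :
    hypPos Q * ι _ (v, 0) = -(ι _ (v, 0) * hypPos Q) := by
  rw [hypPos, ι_inl_mul_ι_inr, neg_neg]

theorem toMatrixTwo_hypNeg : toMatrixTwo Q (hypNeg Q) = !![0, 1; -1, 0] := by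
  simp [hypNeg, toMatrixTwo_ι]

theorem toMatrixTwo_hypPos : toMatrixTwo Q (hypPos Q) = !![0, 1; 1, 0] := by
  simp [hypPos, toMatrixTwo_ι]

/-- The embedding of the coefficients into the centralizer of the hyperbolic plane. -/
noncomputable def hypCoeff : CliffordAlgebra Q →ₐ[ℝ] CliffordAlgebra (Q.prod (QSig 1 1)) :=
  lift _ ⟨LinearMap.mulRight ℝ (hypNeg Q * hypPos Q) ∘ₗ ι _ ∘ₗ LinearMap.inl ℝ M _, by
    intro v
    have hv := ι_sq_scalar (Q.prod (QSig 1 1)) (v, 0)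
    simp only [QuadraticMap.prod_apply, QuadraticMap.map_zero, add_zero] at hv
    have h : hypNeg Q * hypPos Q * ι _ (v, 0) = ι _ (v, 0) * (hypNeg Q * hypPos Q) := by
      rw [mul_assoc, hypPos_mul_ι_inl, mul_neg, ← mul_assoc, hypNeg_mul_ι_inl, neg_mul, neg_neg,
        mul_assoc]
    have sq : hypNeg Q * hypPos Q * (hypNeg Q * hypPos Q) = 1 := by
      rw [mul_assoc, ← mul_assoc (hypPos Q), hypPos_mul_hypNeg, neg_mul, mul_assoc (hypNeg Q),
        hypPos_mul_self, mul_one, mul_neg, hypNeg_mul_self, neg_neg]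
    simp only [LinearMap.comp_apply, LinearMap.mulRight_apply, LinearMap.inl_apply]
    rw [mul_assoc, ← mul_assoc (hypNeg Q * hypPos Q), h, mul_assoc (ι _ _), sq, mul_one, hv]⟩

theorem hypCoeff_ι (v : M) : hypCoeff Q (ι Q v) = ι _ (v, 0) * (hypNeg Q * hypPos Q) :=
  lift_ι_apply ..

theorem commute_hypCoeff {z : CliffordAlgebra (Q.prod (QSig 1 1))}
    (h : ∀ v, Commute (ι _ (v, 0) * (hypNeg Q * hypPos Q)) z) (b : CliffordAlgebra Q) :
    Commute (hypCoeff Q b) z := by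
  induction b using CliffordAlgebra.induction with
  | algebraMap r => simpa using Algebra.commute_algebraMap_left r z
  | ι v => simpa [hypCoeff_ι] using h v
  | mul a b ha hb => simpa using ha.mul_left hb
  | add a b ha hb => simpa using ha.add_left hb

theorem commute_hypCoeff_hypNeg (b : CliffordAlgebra Q) : Commute (hypCoeff Q b) (hypNeg Q) := by
  refine commute_hypCoeff Q (fun v => ?_) b
  rw [commute_iff_eq, ← mul_assoc (hypNeg Q), hypNeg_mul_ι_inl, neg_mul, mul_assoc, mul_assoc,
    hypPos_mul_hypNeg, mul_neg, mul_neg, mul_assoc]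

theorem commute_hypCoeff_hypPos (b : CliffordAlgebra Q) : Commute (hypCoeff Q b) (hypPos Q) := by
  refine commute_hypCoeff Q (fun v => ?_) b
  rw [commute_iff_eq, ← mul_assoc (hypPos Q), hypPos_mul_ι_inl, neg_mul,
    mul_assoc (ι _ _) (hypPos Q), ← mul_assoc (hypPos Q), hypPos_mul_hypNeg, neg_mul, mul_neg,
    neg_neg, mul_assoc, mul_assoc]

/-- The inverse of `toMatrixTwo`. -/
noncomputable def ofMatrixTwo :
    Matrix (Fin 2) (Fin 2) (CliffordAlgebra Q) →ₐ[ℝ] CliffordAlgebra (Q.prod (QSig 1 1)) :=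
  Matrix.algHomOfUnits (hypCoeff Q) (hyperbolicUnits (hypNeg Q) (hypPos Q))
    (hyperbolicUnits_mul (hypNeg_mul_self Q) (hypPos_mul_self Q) (hypPos_mul_hypNeg Q))
    (sum_hyperbolicUnits _ _) fun b => commute_hyperbolicUnits (commute_hypCoeff_hypNeg Q b)
      (commute_hypCoeff_hypPos Q b)

theorem ofMatrixTwo_apply (A : Matrix (Fin 2) (Fin 2) (CliffordAlgebra Q)) :
    ofMatrixTwo Q A =
      ∑ i, ∑ j, hypCoeff Q (A i j) * hyperbolicUnits (hypNeg Q) (hypPos Q) i j :=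
  rfl

theorem toMatrixTwo_hypCoeff (b : CliffordAlgebra Q) :
    toMatrixTwo Q (hypCoeff Q b) = Matrix.scalar (Fin 2) b := by
  induction b using CliffordAlgebra.induction with
  | algebraMap r => simp; rfl
  | ι v =>
    simp only [hypCoeff_ι, map_mul, toMatrixTwo_hypNeg, toMatrixTwo_hypPos, toMatrixTwo_ι]
    ext i j
    fin_cases i <;> fin_cases j <;> simp
  | mul a b ha hb => rw [map_mul, map_mul, map_mul, ha, hb]
  | add a b ha hb => rw [map_add, map_add, map_add, ha, hb]

theorem toMatrixTwo_hyperbolicUnits (i j : Fin 2) :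
    toMatrixTwo Q (hyperbolicUnits (hypNeg Q) (hypPos Q) i j) = Matrix.single i j 1 := by
  fin_cases i <;> fin_cases j <;> ext k l <;> fin_cases k <;> fin_cases l <;>
    simp [hyperbolicUnits, toMatrixTwo_hypNeg, toMatrixTwo_hypPos] <;> module

theorem toMatrixTwo_comp_ofMatrixTwo :
    (toMatrixTwo Q).comp (ofMatrixTwo Q) = AlgHom.id ℝ _ := by
  ext A : 1
  simp only [AlgHom.comp_apply, ofMatrixTwo_apply, map_sum, map_mul,
    toMatrixTwo_hypCoeff, toMatrixTwo_hyperbolicUnits, AlgHom.id_apply]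
  conv_rhs => rw [Matrix.matrix_eq_sum_single A]
  simp [← Matrix.smul_eq_diagonal_mul]

theorem ofMatrixTwo_comp_toMatrixTwo :
    (ofMatrixTwo Q).comp (toMatrixTwo Q) = AlgHom.id ℝ _ := by
  refine hom_ext (LinearMap.ext fun ⟨v, x⟩ => ?_)
  have h : ι (Q.prod (QSig 1 1)) (v, x) = ι _ (v, 0) + (x 0 • hypNeg Q + x 1 • hypPos Q) := by
    rw [← ι_inr_eq_hyp, ← map_add, Prod.mk_add_mk, add_zero, zero_add]
  have sq : hypNeg Q * (hypPos Q * (hypNeg Q * hypPos Q)) = 1 := by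
    rw [← mul_assoc (hypPos Q), hypPos_mul_hypNeg, neg_mul, mul_assoc (hypNeg Q),
      hypPos_mul_self, mul_one, mul_neg, hypNeg_mul_self, neg_neg]
  change ofMatrixTwo Q (toMatrixTwo Q (ι _ (v, x))) = ι _ (v, x)
  rw [toMatrixTwo_ι, h]
  simp [ofMatrixTwo_apply, hypCoeff_ι, hyperbolicUnits, add_mul, sub_mul, mul_add, mul_sub, mul_assoc,
    sq, ← Algebra.smul_def, smul_add, smul_sub]
  module

/-- `Cl(Q ⊕ H) ≅ M₂(Cl(Q))` for a hyperbolic plane `H`. -/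
noncomputable def equivMatrixTwo :
    CliffordAlgebra (Q.prod (QSig 1 1)) ≃ₐ[ℝ] Matrix (Fin 2) (Fin 2) (CliffordAlgebra Q) :=
  AlgEquiv.ofAlgHom (toMatrixTwo Q) (ofMatrixTwo Q) (toMatrixTwo_comp_ofMatrixTwo Q)
    (ofMatrixTwo_comp_toMatrixTwo Q)

end Hyperbolic

/-- `Cl_{r+n,s+n} ≅ M_{2ⁿ}(Cl_{r,s})`. -/
theorem nonempty_equiv_matrix_two_pow (r s n : ℕ) :
    Nonempty (CliffordAlgebra (QSig (r + n) (s + n)) ≃ₐ[ℝ]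
      Matrix (Fin (2 ^ n)) (Fin (2 ^ n)) (CliffordAlgebra (QSig r s))) := by
  induction n with
  | zero =>
    refine ⟨AlgEquiv.ofBijective (Matrix.scalarAlgHom (Fin 1) ℝ)
      ⟨fun _ _ => Matrix.scalar_inj.mp, fun A => ⟨A 0 0, ?_⟩⟩⟩
    ext i j
    fin_cases i; fin_cases j
    simp
  | succ n ih =>
    obtain ⟨f⟩ := ih
    exact ⟨(equivOfIsometry (QSig.prodIsometryEquiv (r + n) (s + n) 1 1)).symm.trans <|
      (equivMatrixTwo _).trans <| f.mapMatrix.trans <| (Matrix.compAlgEquiv _ _ _ ℝ).trans <|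
      Matrix.reindexAlgEquiv ℝ _ <| finProdFinEquiv.trans <| finCongr (pow_succ' 2 n).symm⟩

end CliffordAlgebra

/-- Periodicity of real Clifford algebras:
`Cl_{r+8,s} ≅ Cl_{r,s+8} ≅ M₁₆(Cl_{r,s})`. -/
theorem cliffordAlgebra_signature_eight_periodicity (r s : ℕ) :
    Nonempty (CliffordAlgebra (QSig (r + 8) s) ≃ₐ[ℝ] CliffordAlgebra (QSig r (s + 8))) ∧
      Nonempty (CliffordAlgebra (QSig (r + 8) s) ≃ₐ[ℝ]
        Matrix (Fin 16) (Fin 16) (CliffordAlgebra (QSig r s))) ∧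
      Nonempty (CliffordAlgebra (QSig r (s + 8)) ≃ₐ[ℝ]
        Matrix (Fin 16) (Fin 16) (CliffordAlgebra (QSig r s))) := by
  obtain ⟨f⟩ := nonempty_equiv_shift_four (r + 4) s
  obtain ⟨g⟩ := nonempty_equiv_shift_four r (s + 4)
  obtain ⟨k⟩ := nonempty_equiv_matrix_two_pow r s 4
  exact ⟨⟨f.trans g⟩, ⟨f.trans k⟩, ⟨g.symm.trans k⟩⟩
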